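/- Assume α ≥ 1, λ is nondecreasing on [t₀,∞), b(t) > β'(t) + β(t)/t (equivalently w(t) > 0) for every t ≥ t₀, and (α−3)·w(t) − t·w'(t) ≥ 0 for every t ≥ t₀. Then ∫_{t₀}^{∞} ( t²·w(t)·λ'(t)/2 + t²·β(t)·w(t) )·‖∇Φ_{λ(t)}(x(t))‖² dt < +∞. -/

import Mathlib

open Set MeasureTheory Filter Real

noncomputable section

/-- Convexity for extended-real-valued functions. -/
def EConvexOn {H : Type*} [NormedAddCommGroup H] [NormedSpace ℝ H] (f : H → EReal) : Prop :=
  ∀ x y : H, ∀ a c : ℝ, 0 ≤ a → 0 ≤ c → a + c = 1 →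
    f (a • x + c • y) ≤ (a : EReal) * f x + (c : EReal) * f y

/-- `p` is the proximal point of `f` with parameter `l` at `x`, i.e. the (unique) minimizer of
`y ↦ f y + ‖x - y‖² / (2l)`. -/
def IsProxPt {H : Type*} [NormedAddCommGroup H] [InnerProductSpace ℝ H]
    (f : H → EReal) (l : ℝ) (x p : H) : Prop :=
  ∀ y : H, f p + ((‖x - p‖ ^ 2 / (2 * l) : ℝ) : EReal)
      ≤ f y + ((‖x - y‖ ^ 2 / (2 * l) : ℝ) : EReal)

/-- The Moreau envelope of `f` with parameter `l` (as a real number). -/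
def moreau {H : Type*} [NormedAddCommGroup H] [InnerProductSpace ℝ H]
    (f : H → EReal) (l : ℝ) (x : H) : ℝ :=
  (⨅ y : H, f y + ((‖x - y‖ ^ 2 / (2 * l) : ℝ) : EReal)).toReal

/-!
With `G t = ∇Φ_{λ(t)}(x t)`, `φ t = Φ_{λ(t)}(x t) - Φ*`, a minimizer `z` and
`q t = (α - 1) (x t - z) + t (ẋ t + β t G t)`, the equation of motion says `q' = -t w G`. The Moreau
envelope along the trajectory has derivative `⟪G, ẋ⟫ - λ' / 2 * ‖G‖²`, so in the derivative of
`E t = t² w t φ t + ‖q t‖² / 2` the terms `⟪G, ẋ⟫` cancel. The subgradient inequality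
`φ ≤ ⟪G, x - z⟫` and the growth condition on `w` then leave
`E' ≤ -(t² w λ' / 2 + t² β w) ‖G‖²`; integrating and using `E ≥ 0` gives the claim.
-/

section Calculus

theorem hasDerivWithinAt_of_le_of_le {f g h : ℝ → ℝ} {d t : ℝ} {S : Set ℝ}
    (hg : HasDerivWithinAt g d S t) (hh : HasDerivWithinAt h d S t)
    (hgt : g t = f t) (hht : h t = f t)
    (hgf : ∀ s ∈ S, g s ≤ f s) (hfh : ∀ s ∈ S, f s ≤ h s) : HasDerivWithinAt f d S t := by
  rw [hasDerivWithinAt_iff_isLittleO] at *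
  refine Asymptotics.IsBigO.trans_isLittleO (.of_bound' ?_) (hg.norm_left.add hh.norm_left)
  filter_upwards [self_mem_nhdsWithin] with s hs
  have hlower : g s - g t - (s - t) • d ≤ f s - f t - (s - t) • d := by linarith [hgf s hs]
  have hupper : f s - f t - (s - t) • d ≤ h s - h t - (s - t) • d := by linarith [hfh s hs]
  exact (abs_le_max_abs_abs hlower hupper).trans
    ((max_le_add_of_nonneg (abs_nonneg _) (abs_nonneg _)).trans (le_abs_self _))

theorem exists_tendsto_atTop_of_antitoneOn_Ici {ι R : Type*} [SemilatticeSup ι]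
    [ConditionallyCompleteLattice R] [TopologicalSpace R] [InfConvergenceClass R]
    {E : ι → R} {a : ι}
    (hE : AntitoneOn E (Ici a)) (hbdd : BddBelow (E '' Ici a)) :
    ∃ l, Tendsto E atTop (nhds l) := by
  rw [image_eq_range] at hbdd
  exact ⟨_, tendsto_comp_val_Ici_atTop.mp
    (tendsto_atTop_ciInf (antitoneOn_iff_antitone.mp hE) hbdd)⟩

theorem lintegral_Ici_lt_top_of_le_neg_deriv {E E' F : ℝ → ℝ} {a : ℝ}
    (hE : ∀ t ≥ a, HasDerivWithinAt E (E' t) (Ici a) t) (hbdd : BddBelow (E '' Ici a))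
    (hF : ∀ t ≥ a, 0 ≤ F t) (hFE : ∀ t ≥ a, F t ≤ -E' t) :
    ∫⁻ t in Ici a, ENNReal.ofReal (F t) < ⊤ := by
  have hcont : ContinuousOn E (Ici a) := fun t ht => (hE t ht).continuousWithinAt
  have hderiv : ∀ t ∈ Ioi a, HasDerivAt E (E' t) t := fun t ht =>
    (hE t (le_of_lt ht)).hasDerivAt (Ici_mem_nhds ht)
  have hnonpos : ∀ t ∈ Ioi a, E' t ≤ 0 := fun t ht => by
    linarith [hF t (le_of_lt ht), hFE t (le_of_lt ht)]
  have hanti : AntitoneOn E (Ici a) := by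
    refine antitoneOn_of_hasDerivWithinAt_nonpos (f' := E') (convex_Ici a) hcont ?_ ?_ <;>
      rw [interior_Ici]
    · exact fun t ht => (hderiv t ht).hasDerivWithinAt
    · exact hnonpos
  obtain ⟨l, hl⟩ := exists_tendsto_atTop_of_antitoneOn_Ici hanti hbdd
  have hint : IntegrableOn E' (Ioi a) :=
    integrableOn_Ioi_deriv_of_nonpos (hcont a self_mem_Ici) hderiv hnonpos hl
  rw [← setLIntegral_congr Ioi_ae_eq_Ici]
  exact (setLIntegral_mono' measurableSet_Ioi fun t ht =>
    ENNReal.ofReal_le_ofReal (hFE t (le_of_lt ht))).trans_lt hint.neg.lintegral_lt_top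

end Calculus

section NormedSpace

variable {V : Type*} [NormedAddCommGroup V] [NormedSpace ℝ V] {S : Set ℝ} {t : ℝ}

/-- The vector `q = (α - 1) (x - z) + t (v + β g)` of the Lyapunov analysis: the velocity `v`,
corrected by the Hessian-driven damping term `β g` and anchored at the point `z`. -/
def anchoredVelocity (α : ℝ) (β : ℝ → ℝ) (x v g : ℝ → V) (z : V) (t : ℝ) : V :=
  (α - 1) • (x t - z) + t • (v t + β t • g t)

theorem hasDerivWithinAt_anchoredVelocity {α β' w : ℝ} {β : ℝ → ℝ} {x v g : ℝ → V}
    {z acc g' : V} (ht : t ≠ 0)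
    (hβ : HasDerivWithinAt β β' S t) (hx : HasDerivWithinAt x (v t) S t)
    (hv : HasDerivWithinAt v acc S t) (hg : HasDerivWithinAt g g' S t)
    (hode : acc + (α / t) • v t + β t • g' + (w + β' + β t / t) • g t = 0) :
    HasDerivWithinAt (anchoredVelocity α β x v g z) (-(t * w) • g t) S t := by
  have hq := ((hx.sub_const z).const_smul (α - 1)).add
    ((hasDerivWithinAt_id t S).smul (hv.add (hβ.smul hg)))
  refine HasDerivWithinAt.congr_deriv (f := anchoredVelocity α β x v g z) hq ?_
  have hacc : acc = -((α / t) • v t + β t • g' + (w + β' + β t / t) • g t) := by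
    rw [eq_neg_iff_add_eq_zero, ← hode]
    abel
  simp only [hacc, id, Pi.add_apply, Pi.smul_apply']
  match_scalars <;> field_simp <;> ring

theorem differentiableWithinAt_of_inv_smul_sub {x p : ℝ → V} {lam : ℝ → ℝ}
    (hlam0 : ∀ s ∈ S, lam s ≠ 0) (ht : t ∈ S) (hx : DifferentiableWithinAt ℝ x S t)
    (hlam : DifferentiableWithinAt ℝ lam S t)
    (hg : DifferentiableWithinAt ℝ (fun s => (lam s)⁻¹ • (x s - p s)) S t) :
    DifferentiableWithinAt ℝ p S t := by
  have hp : ∀ s ∈ S, p s = x s - lam s • (lam s)⁻¹ • (x s - p s) := fun s hs => by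
    rw [smul_inv_smul₀ (hlam0 s hs), sub_sub_cancel]
  exact (hx.sub (hlam.smul hg)).congr hp (hp t ht)

end NormedSpace

/-- The Lyapunov energy `t² w φ + ‖q‖² / 2`, where `φ` is the gap to the optimal value and `q` the
`anchoredVelocity`. -/
def lyapunovEnergy {V : Type*} [NormedAddCommGroup V] (w φ : ℝ → ℝ) (q : ℝ → V) (t : ℝ) : ℝ :=
  t ^ 2 * w t * φ t + ‖q t‖ ^ 2 / 2

theorem lyapunovEnergy_nonneg {V : Type*} [NormedAddCommGroup V] {w φ : ℝ → ℝ} {q : ℝ → V} {t : ℝ}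
    (hw : 0 ≤ w t) (hφ : 0 ≤ φ t) : 0 ≤ lyapunovEnergy w φ q t := by
  unfold lyapunovEnergy
  positivity

section InnerProductSpace

variable {H : Type*} [NormedAddCommGroup H] [InnerProductSpace ℝ H]

theorem hasDerivWithinAt_norm_sq_div_two_mul {u : ℝ → H} {l : ℝ → ℝ} {u' : H} {l' t : ℝ}
    {S : Set ℝ} (hu : HasDerivWithinAt u u' S t) (hl : HasDerivWithinAt l l' S t) (h0 : l t ≠ 0) :
    HasDerivWithinAt (fun s => ‖u s‖ ^ 2 / (2 * l s))
      (inner ℝ ((l t)⁻¹ • u t) u' - l' / 2 * ‖(l t)⁻¹ • u t‖ ^ 2) S t := by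
  refine (hu.norm_sq.div (hl.const_mul 2) (by positivity)).congr_deriv ?_
  rw [real_inner_smul_left, norm_smul, mul_pow ‖(l t)⁻¹‖, norm_eq_abs, sq_abs]
  field_simp

namespace IsProxPt

variable {f : H → EReal} {l : ℝ} {x p y z : H}

theorem ne_top (hp : IsProxPt f l x p) (hy : f y ≠ ⊤) : f p ≠ ⊤ := by
  intro hfp
  have hle := hp y
  rw [hfp, EReal.top_add_coe, top_le_iff] at hle
  exact EReal.add_ne_top hy (EReal.coe_ne_top _) hle

theorem toReal_add_le (hp : IsProxPt f l x p) (hbot : ∀ y, f y ≠ ⊥) (hy : f y ≠ ⊤) :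
    (f p).toReal + ‖x - p‖ ^ 2 / (2 * l) ≤ (f y).toReal + ‖x - y‖ ^ 2 / (2 * l) := by
  have hle := hp y
  rw [← EReal.coe_toReal (hp.ne_top hy) (hbot p), ← EReal.coe_toReal hy (hbot y)] at hle
  exact_mod_cast hle

theorem moreau_eq (hp : IsProxPt f l x p) (hbot : f p ≠ ⊥) (htop : f p ≠ ⊤) :
    moreau f l x = (f p).toReal + ‖x - p‖ ^ 2 / (2 * l) := by
  have hinf : ⨅ y, f y + ((‖x - y‖ ^ 2 / (2 * l) : ℝ) : EReal)
      = f p + ((‖x - p‖ ^ 2 / (2 * l) : ℝ) : EReal) := le_antisymm (iInf_le _ p) (le_iInf hp)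
  rw [moreau, hinf, EReal.toReal_add htop hbot (EReal.coe_ne_top _) (EReal.coe_ne_bot _),
    EReal.toReal_coe]

theorem moreau_le (hp : IsProxPt f l x p) (hbot : ∀ y, f y ≠ ⊥) (hy : f y ≠ ⊤) :
    moreau f l x ≤ (f y).toReal + ‖x - y‖ ^ 2 / (2 * l) :=
  (hp.moreau_eq (hbot p) (hp.ne_top hy)).trans_le (hp.toReal_add_le hbot hy)

theorem toReal_le_moreau (hp : IsProxPt f l x p) (hl : 0 ≤ l) (hbot : ∀ y, f y ≠ ⊥)
    (hz : f z ≠ ⊤) (hmin : f z ≤ f p) : (f z).toReal ≤ moreau f l x := by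
  rw [hp.moreau_eq (hbot p) (hp.ne_top hz)]
  have hle := EReal.toReal_le_toReal hmin (hbot z) (hp.ne_top hz)
  have hnonneg : 0 ≤ ‖x - p‖ ^ 2 / (2 * l) := by positivity
  linarith

theorem toReal_sub_le_inner_add (hp : IsProxPt f l x p) (hf : EConvexOn f) (hl : l ≠ 0)
    (hbot : ∀ y, f y ≠ ⊥) (hz : f z ≠ ⊤) {ε : ℝ} (hε : 0 < ε) (hε' : ε ≤ 1) :
    (f p).toReal - (f z).toReal
      ≤ inner ℝ (l⁻¹ • (x - p)) (p - z) + ε * (‖p - z‖ ^ 2 / (2 * l)) := by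
  have hconv := hf p z (1 - ε) ε (by linarith) hε.le (by ring)
  have hprox := (hp ((1 - ε) • p + ε • z)).trans (add_le_add_left hconv _)
  rw [← EReal.coe_toReal (hp.ne_top hz) (hbot p), ← EReal.coe_toReal hz (hbot z)] at hprox
  have hreal : (f p).toReal + ‖x - p‖ ^ 2 / (2 * l) ≤ (1 - ε) * (f p).toReal + ε * (f z).toReal
      + ‖x - ((1 - ε) • p + ε • z)‖ ^ 2 / (2 * l) := by exact_mod_cast hprox
  have hexpand : ‖x - ((1 - ε) • p + ε • z)‖ ^ 2 / (2 * l) = ‖x - p‖ ^ 2 / (2 * l)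
      + ε * (inner ℝ (l⁻¹ • (x - p)) (p - z) + ε * (‖p - z‖ ^ 2 / (2 * l))) := by
    rw [show x - ((1 - ε) • p + ε • z) = (x - p) + ε • (p - z) by module, norm_add_sq_real,
      real_inner_smul_right, real_inner_smul_left, norm_smul, norm_eq_abs, mul_pow, sq_abs]
    field_simp
    ring
  refine le_of_mul_le_mul_left ?_ hε
  linarith

theorem toReal_sub_le_inner (hp : IsProxPt f l x p) (hf : EConvexOn f) (hl : l ≠ 0)
    (hbot : ∀ y, f y ≠ ⊥) (hz : f z ≠ ⊤) :
    (f p).toReal - (f z).toReal ≤ inner ℝ (l⁻¹ • (x - p)) (p - z) := by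
  have hlim : Tendsto (fun ε : ℝ => inner ℝ (l⁻¹ • (x - p)) (p - z) + ε * (‖p - z‖ ^ 2 / (2 * l)))
      (nhdsWithin 0 (Ioi 0)) (nhds (inner ℝ (l⁻¹ • (x - p)) (p - z))) :=
    (Continuous.tendsto' (by fun_prop) 0 _ (by simp)).mono_left nhdsWithin_le_nhds
  refine ge_of_tendsto hlim ?_
  filter_upwards [Ioc_mem_nhdsGT one_pos] with ε hε
  exact hp.toReal_sub_le_inner_add hf hl hbot hz hε.1 hε.2

theorem moreau_sub_le_inner (hp : IsProxPt f l x p) (hf : EConvexOn f) (hl : 0 < l)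
    (hbot : ∀ y, f y ≠ ⊥) (hz : f z ≠ ⊤) :
    moreau f l x - (f z).toReal ≤ inner ℝ (l⁻¹ • (x - p)) (x - z) := by
  have hsub := hp.toReal_sub_le_inner hf hl.ne' hbot hz
  have hsplit : inner ℝ (l⁻¹ • (x - p)) (x - z)
      = 2 * (‖x - p‖ ^ 2 / (2 * l)) + inner ℝ (l⁻¹ • (x - p)) (p - z) := by
    rw [← sub_add_sub_cancel x p z, inner_add_right, real_inner_smul_left _ (x - p),
      real_inner_self_eq_norm_sq]
    field_simp
  have hnonneg : 0 ≤ ‖x - p‖ ^ 2 / (2 * l) := by positivity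
  rw [hp.moreau_eq (hbot p) (hp.ne_top hz), hsplit]
  linarith

end IsProxPt

variable {S : Set ℝ} {t : ℝ}

theorem hasDerivWithinAt_moreau {f : H → EReal} {x p : ℝ → H} {lam : ℝ → ℝ} {x' : H} {lam' : ℝ}
    (hbot : ∀ y, f y ≠ ⊥) (hproper : ∃ y, f y ≠ ⊤)
    (hprox : ∀ s ∈ S, IsProxPt f (lam s) (x s) (p s)) (ht : t ∈ S) (hlam0 : lam t ≠ 0)
    (hx : HasDerivWithinAt x x' S t) (hlam : HasDerivWithinAt lam lam' S t)
    (hp : DifferentiableWithinAt ℝ p S t) :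
    HasDerivWithinAt (fun s => moreau f (lam s) (x s))
      (inner ℝ ((lam t)⁻¹ • (x t - p t)) x' - lam' / 2 * ‖(lam t)⁻¹ • (x t - p t)‖ ^ 2) S t := by
  -- The competitors `p t` and `p s` for the minimization problems at `s` and `t` squeeze the
  -- envelope between two functions with the same derivative at `t`; the derivative of `p` cancels.
  obtain ⟨y, hy⟩ := hproper
  have htop : ∀ s ∈ S, f (p s) ≠ ⊤ := fun s hs => (hprox s hs).ne_top hy
  have heq : ∀ s ∈ S, moreau f (lam s) (x s)
      = (f (p s)).toReal + ‖x s - p s‖ ^ 2 / (2 * lam s) := fun s hs =>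
    (hprox s hs).moreau_eq (hbot _) (htop s hs)
  have hupper := (hasDerivWithinAt_norm_sq_div_two_mul (hx.sub_const (p t)) hlam hlam0).const_add
    (f (p t)).toReal
  have hlower : HasDerivWithinAt (fun s => moreau f (lam t) (x t)
      + (‖x s - p s‖ ^ 2 / (2 * lam s) - ‖x t - p s‖ ^ 2 / (2 * lam t)))
      (inner ℝ ((lam t)⁻¹ • (x t - p t)) x' - lam' / 2 * ‖(lam t)⁻¹ • (x t - p t)‖ ^ 2) S t := by
    have hmoving := hasDerivWithinAt_norm_sq_div_two_mul (hx.sub hp.hasDerivWithinAt) hlam hlam0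
    have hfixed := hasDerivWithinAt_norm_sq_div_two_mul (hp.hasDerivWithinAt.const_sub (x t))
      (hasDerivWithinAt_const t S (lam t)) hlam0
    refine ((hmoving.sub hfixed).const_add _).congr_deriv ?_
    simp only [Pi.sub_apply, inner_sub_right, inner_neg_right]
    ring
  refine hasDerivWithinAt_of_le_of_le hlower hupper (by ring) (heq t ht).symm (fun s hs => ?_)
    (fun s hs => (hprox s hs).moreau_le hbot (htop t ht))
  linarith [heq s hs, (hprox t ht).moreau_le hbot (htop s hs)]

variable {β : ℝ → ℝ} {x v g : ℝ → H} {z : H} {α : ℝ}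

theorem hasDerivWithinAt_lyapunovEnergy {q : ℝ → H} {w φ : ℝ → ℝ} {w' φ' : ℝ} {q' : H}
    (hw : HasDerivWithinAt w w' S t) (hφ : HasDerivWithinAt φ φ' S t)
    (hq : HasDerivWithinAt q q' S t) :
    HasDerivWithinAt (lyapunovEnergy w φ q)
      ((2 * t * w t + t ^ 2 * w') * φ t + t ^ 2 * w t * φ' + inner ℝ (q t) q') S t := by
  have hE := ((((hasDerivAt_pow 2 t).hasDerivWithinAt (s := S)).mul hw).mul hφ).add
    (hq.norm_sq.div_const 2)
  refine HasDerivWithinAt.congr_deriv (f := lyapunovEnergy w φ q) hE ?_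
  simp only [Pi.mul_apply]
  push_cast
  ring

theorem inner_anchoredVelocity :
    inner ℝ (anchoredVelocity α β x v g z t) (g t)
      = (α - 1) * inner ℝ (g t) (x t - z) + t * (inner ℝ (g t) (v t) + β t * ‖g t‖ ^ 2) := by
  rw [real_inner_comm, anchoredVelocity]
  simp only [inner_add_right, real_inner_smul_right, real_inner_self_eq_norm_sq]

theorem lyapunov_rate_add_dissipation_nonpos {w w' φ lam' : ℝ} (ht : 0 ≤ t) (hα : 1 ≤ α)
    (hw : 0 ≤ w) (hgrowth : 0 ≤ (α - 3) * w - t * w') (hφ : 0 ≤ φ)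
    (hφ_le : φ ≤ inner ℝ (g t) (x t - z)) :
    (2 * t * w + t ^ 2 * w') * φ
      + t ^ 2 * w * (inner ℝ (g t) (v t) - lam' / 2 * ‖g t‖ ^ 2)
      + inner ℝ (anchoredVelocity α β x v g z t) (-(t * w) • g t)
      + (t ^ 2 * w * lam' / 2 + t ^ 2 * β t * w) * ‖g t‖ ^ 2 ≤ 0 := by
  have hcoeff : 0 ≤ t * w * (α - 1) := mul_nonneg (mul_nonneg ht hw) (sub_nonneg.mpr hα)
  rw [real_inner_smul_right, inner_anchoredVelocity]
  calc
    _ = (2 * t * w + t ^ 2 * w') * φ - t * w * (α - 1) * inner ℝ (g t) (x t - z) := by ring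
    _ ≤ (2 * t * w + t ^ 2 * w') * φ - t * w * (α - 1) * φ :=
      sub_le_sub_left (mul_le_mul_of_nonneg_left hφ_le hcoeff) _
    _ = -(t * ((α - 3) * w - t * w') * φ) := by ring
    _ ≤ 0 := neg_nonpos.mpr (mul_nonneg (mul_nonneg ht hgrowth) hφ)

theorem lintegral_dissipation_lt_top {t₀ : ℝ} {w φ β' w' lam' : ℝ → ℝ} {acc g' : ℝ → H}
    (ht₀ : 0 < t₀) (hα : 1 ≤ α)
    (hβ : ∀ t ≥ t₀, HasDerivWithinAt β (β' t) (Ici t₀) t)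
    (hw : ∀ t ≥ t₀, HasDerivWithinAt w (w' t) (Ici t₀) t)
    (hx : ∀ t ≥ t₀, HasDerivWithinAt x (v t) (Ici t₀) t)
    (hv : ∀ t ≥ t₀, HasDerivWithinAt v (acc t) (Ici t₀) t)
    (hg : ∀ t ≥ t₀, HasDerivWithinAt g (g' t) (Ici t₀) t)
    (hφ : ∀ t ≥ t₀,
      HasDerivWithinAt φ (inner ℝ (g t) (v t) - lam' t / 2 * ‖g t‖ ^ 2) (Ici t₀) t)
    (hode : ∀ t ≥ t₀,
      acc t + (α / t) • v t + β t • g' t + (w t + β' t + β t / t) • g t = 0)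
    (hw0 : ∀ t ≥ t₀, 0 ≤ w t) (hdamp : ∀ t ≥ t₀, 0 ≤ lam' t / 2 + β t)
    (hgrowth : ∀ t ≥ t₀, 0 ≤ (α - 3) * w t - t * w' t)
    (hφ0 : ∀ t ≥ t₀, 0 ≤ φ t) (hφ_le : ∀ t ≥ t₀, φ t ≤ inner ℝ (g t) (x t - z)) :
    ∫⁻ t in Ici t₀, ENNReal.ofReal
      ((t ^ 2 * w t * lam' t / 2 + t ^ 2 * β t * w t) * ‖g t‖ ^ 2) < ⊤ := by
  have hpos : ∀ t ≥ t₀, 0 < t := fun t ht => ht₀.trans_le ht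
  refine lintegral_Ici_lt_top_of_le_neg_deriv
    (E := lyapunovEnergy w φ (anchoredVelocity α β x v g z))
    (fun t ht => hasDerivWithinAt_lyapunovEnergy (hw t ht) (hφ t ht)
      (hasDerivWithinAt_anchoredVelocity (hpos t ht).ne' (hβ t ht) (hx t ht) (hv t ht) (hg t ht)
        (hode t ht)))
    ⟨0, forall_mem_image.mpr fun t ht => lyapunovEnergy_nonneg (hw0 t ht) (hφ0 t ht)⟩
    (fun t ht => ?_) (fun t ht => ?_)
  · have hcoeff : 0 ≤ t ^ 2 * w t * (lam' t / 2 + β t) :=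
      mul_nonneg (mul_nonneg (sq_nonneg t) (hw0 t ht)) (hdamp t ht)
    exact mul_nonneg (by linarith) (sq_nonneg _)
  · have hrate := lyapunov_rate_add_dissipation_nonpos (β := β) (v := v) (lam' := lam' t)
      (hpos t ht).le hα (hw0 t ht) (hgrowth t ht) (hφ0 t ht) (hφ_le t ht)
    linarith

end InnerProductSpace

theorem moreau_gradient_integral_finite_general
    {H : Type*} [NormedAddCommGroup H] [InnerProductSpace ℝ H]
    (Φ : H → EReal)
    (hΦbot : ∀ y, Φ y ≠ ⊥) (hΦproper : ∃ y, Φ y ≠ ⊤) (hΦconv : EConvexOn Φ)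
    (t₀ α : ℝ) (ht₀ : 0 < t₀)
    (β b lam β' lam' w' : ℝ → ℝ)
    (hlampos : ∀ t ≥ t₀, 0 < lam t)
    (hβ' : ∀ t ≥ t₀, HasDerivAt β (β' t) t)
    (hlam' : ∀ t ≥ t₀, HasDerivAt lam (lam' t) t)
    (hw' : ∀ t ≥ t₀, HasDerivAt (fun s => b s - β' s - β s / s) (w' t) t)
    (x v acc p G' : ℝ → H)
    (hx : ∀ t ≥ t₀, HasDerivAt x (v t) t)
    (hv : ∀ t ≥ t₀, HasDerivAt v (acc t) t)
    (hp : ∀ t ≥ t₀, IsProxPt Φ (lam t) (x t) (p t))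
    (hG' : ∀ t ≥ t₀, HasDerivAt (fun s => (lam s)⁻¹ • (x s - p s)) (G' t) t)
    (hode : ∀ t ≥ t₀, acc t + (α / t) • v t + β t • G' t
        + b t • ((lam t)⁻¹ • (x t - p t)) = 0)
    (hα : 1 ≤ α)
    (hdamp : ∀ t ≥ t₀, 0 ≤ lam' t / 2 + β t)
    (hw : ∀ t ≥ t₀, β' t + β t / t ≤ b t)
    (hgrowth : ∀ t ≥ t₀, 0 ≤ (α - 3) * (b t - β' t - β t / t) - t * w' t)
    (hargmin : ∃ z, ∀ y, Φ z ≤ Φ y) :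
    ∫⁻ t in Ici t₀, ENNReal.ofReal
      ((t ^ 2 * (b t - β' t - β t / t) * lam' t / 2
          + t ^ 2 * β t * (b t - β' t - β t / t))
        * ‖(lam t)⁻¹ • (x t - p t)‖ ^ 2) < ⊤ := by
  obtain ⟨z, hz⟩ := hargmin
  have hztop : Φ z ≠ ⊤ := let ⟨y, hy⟩ := hΦproper; ne_top_of_le_ne_top hy (hz y)
  have hpdiff : ∀ t ≥ t₀, DifferentiableWithinAt ℝ p (Ici t₀) t := fun t ht =>
    differentiableWithinAt_of_inv_smul_sub (fun s hs => (hlampos s hs).ne') ht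
      (hx t ht).differentiableAt.differentiableWithinAt
      (hlam' t ht).differentiableAt.differentiableWithinAt
      (hG' t ht).differentiableAt.differentiableWithinAt
  refine lintegral_dissipation_lt_top (z := z) (w := fun t => b t - β' t - β t / t)
    (φ := fun t => moreau Φ (lam t) (x t) - (Φ z).toReal) ht₀ hα
    (fun t ht => (hβ' t ht).hasDerivWithinAt) (fun t ht => (hw' t ht).hasDerivWithinAt)
    (fun t ht => (hx t ht).hasDerivWithinAt) (fun t ht => (hv t ht).hasDerivWithinAt)
    (fun t ht => (hG' t ht).hasDerivWithinAt) (fun t ht => ?_) (fun t ht => ?_)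
    (fun t ht => by linarith [hw t ht]) hdamp hgrowth (fun t ht => ?_) (fun t ht => ?_)
  · exact (hasDerivWithinAt_moreau hΦbot hΦproper hp ht (hlampos t ht).ne'
      (hx t ht).hasDerivWithinAt (hlam' t ht).hasDerivWithinAt (hpdiff t ht)).sub_const _
  · simpa only [sub_add_cancel, sub_sub, add_assoc] using hode t ht
  · exact sub_nonneg.mpr ((hp t ht).toReal_le_moreau (hlampos t ht).le hΦbot hztop (hz _))
  · exact (hp t ht).moreau_sub_le_inner hΦconv (hlampos t ht) hΦbot hztop

theorem moreau_gradient_integral_finite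
    {H : Type*} [NormedAddCommGroup H] [InnerProductSpace ℝ H] [CompleteSpace H]
    (Φ : H → EReal)
    (hΦbot : ∀ y, Φ y ≠ ⊥) (hΦproper : ∃ y, Φ y ≠ ⊤)
    (hΦconv : EConvexOn Φ) (hΦlsc : LowerSemicontinuous Φ)
    (t₀ α : ℝ) (ht₀ : 0 < t₀)
    (β b lam β' b' lam' w' : ℝ → ℝ)
    (hβnonneg : ∀ t ≥ t₀, 0 ≤ β t)
    (hbpos : ∀ t ≥ t₀, 0 < b t)
    (hlampos : ∀ t ≥ t₀, 0 < lam t)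
    (hβ' : ∀ t ≥ t₀, HasDerivAt β (β' t) t)
    (hb' : ∀ t ≥ t₀, HasDerivAt b (b' t) t)
    (hlam' : ∀ t ≥ t₀, HasDerivAt lam (lam' t) t)
    (hw' : ∀ t ≥ t₀, HasDerivAt (fun s => b s - β' s - β s / s) (w' t) t)
    (x v acc p G' : ℝ → H)
    (hx : ∀ t ≥ t₀, HasDerivAt x (v t) t)
    (hv : ∀ t ≥ t₀, HasDerivAt v (acc t) t)
    (hp : ∀ t ≥ t₀, IsProxPt Φ (lam t) (x t) (p t))
    (hG' : ∀ t ≥ t₀, HasDerivAt (fun s => (lam s)⁻¹ • (x s - p s)) (G' t) t)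
    (hode : ∀ t ≥ t₀, acc t + (α / t) • v t + β t • G' t
        + b t • ((lam t)⁻¹ • (x t - p t)) = 0)
    (hα : 1 ≤ α)
    (hlammono : MonotoneOn lam (Set.Ici t₀))
    (hw : ∀ t ≥ t₀, β' t + β t / t < b t)
    (hAs1 : ∀ t ≥ t₀, 0 ≤ (α - 3) * (b t - β' t - β t / t) - t * w' t)
    (hargmin : ∃ z, ∀ y, Φ z ≤ Φ y)
    :
    ∫⁻ t in Set.Ici t₀, ENNReal.ofReal
      ((t ^ 2 * (b t - β' t - β t / t) * lam' t / 2
          + t ^ 2 * β t * (b t - β' t - β t / t))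
        * ‖(lam t)⁻¹ • (x t - p t)‖ ^ 2) < ⊤ := by
  have hlam'0 : ∀ t ≥ t₀, 0 ≤ lam' t := fun t ht =>
    (hlam' t ht).hasDerivWithinAt.nonneg_of_monotoneOn
      (uniqueDiffOn_Ici t₀ t ht).accPt hlammono
  exact moreau_gradient_integral_finite_general Φ hΦbot hΦproper hΦconv t₀ α ht₀ β b lam β' lam' w'
    hlampos hβ' hlam' hw' x v acc p G' hx hv hp hG' hode hα
    (fun t ht => by linarith [hlam'0 t ht, hβnonneg t ht]) (fun t ht => (hw t ht).le) hAs1 hargmin
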